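/- Let 0 < a < 1 < A. There exists a constant T > 0, depending only on a and A, with the following property: for all radial non-increasing weights u₀, u₁ on 𝔻 each satisfying (LOG 1) and (LOG 2) with constants a, A, for all c₀, c₁ > 0, and for every holomorphic function f on 𝔻 with |f(z)| ≤ max(c₀/u₀(z), c₁/u₁(z)) for all z ∈ 𝔻, there exist holomorphic functions h₀, h₁ on 𝔻 with f = h₀ + h₁, sup_{z∈𝔻} u₀(z)|h₀(z)| ≤ T·c₀ and sup_{z∈𝔻} u₁(z)|h₁(z)| ≤ T·c₁. -/

import Mathlib

noncomputable section

open Complex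

/-- The open unit disc in ℂ. -/
def uD : Set ℂ := {z : ℂ | ‖z‖ < 1}

/-- Holomorphic on the unit disc. -/
def Holo (f : ℂ → ℂ) : Prop := DifferentiableOn ℂ f uD

/-- A weight on 𝔻: continuous and strictly positive. -/
def IsWeight (v : ℂ → ℝ) : Prop :=
  ContinuousOn v uD ∧ ∀ z ∈ uD, 0 < v z

/-- Radial weight. -/
def Radial (v : ℂ → ℝ) : Prop :=
  ∀ z ∈ uD, ∀ w ∈ uD, ‖z‖ = ‖w‖ → v z = v w

/-- Non-increasing in the modulus. -/
def NonInc (v : ℂ → ℝ) : Prop :=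
  ∀ z ∈ uD, ∀ w ∈ uD, ‖z‖ ≤ ‖w‖ → v w ≤ v z

/-- r₀ = 0, r_κ = 1 - 2^(-2^κ) for κ ≥ 1. -/
def rseq (κ : ℕ) : ℝ := if κ = 0 then 0 else 1 - 1 / 2 ^ (2 ^ κ)

/-- Condition (LOG 1) for a single radial weight. -/
def Log1 (A : ℝ) (v : ℂ → ℝ) : Prop :=
  ∀ κ : ℕ, v (rseq κ : ℂ) ≤ A * v (rseq (κ + 1) : ℂ)

/-- Condition (LOG 2) for a single radial weight. -/
def Log2 (a : ℝ) (v : ℂ → ℝ) : Prop :=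
  ∀ κ : ℕ, v (rseq (κ + 1) : ℂ) ≤ a * v (rseq κ : ℂ)

/-- The weight tends to 0 as |z| → 1. -/
def VanishAtOne (v : ℂ → ℝ) : Prop :=
  ∀ ε > 0, ∃ r : ℝ, r < 1 ∧ ∀ z ∈ uD, r ≤ ‖z‖ → v z ≤ ε

/-- Associated growth function w~ of a growth condition w. -/
def growthTilde (w : ℂ → ℝ) (z : ℂ) : ℝ :=
  sSup {t : ℝ | ∃ g : ℂ → ℂ, Holo g ∧ (∀ x ∈ uD, ‖g x‖ ≤ w x) ∧ t = ‖g z‖}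

/-- Associated weight ṽ = 1/(1/v)~. -/
def assocWeight (v : ℂ → ℝ) (z : ℂ) : ℝ := (growthTilde (fun x => 1 / v x) z)⁻¹

/-- Monotonicity of the double sequence: decreasing in n, increasing in N. -/
def MonoSeq (a : ℕ → ℕ → ℂ → ℝ) : Prop :=
  ∀ N n, ∀ z ∈ uD, a N (n + 1) z ≤ a N n z ∧ a N n z ≤ a (N + 1) n z

/-- Condition (LOG) for a double sequence with constants 0 < a < 1 < A. -/
def SeqLOG (aa A : ℝ) (a : ℕ → ℕ → ℂ → ℝ) : Prop :=
  ∀ N n, Radial (a N n) ∧ NonInc (a N n) ∧ VanishAtOne (a N n) ∧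
    Log1 A (a N n) ∧ Log2 aa (a N n)

/-- Condition (Q). -/
def CondQ (a : ℕ → ℕ → ℂ → ℝ) : Prop :=
  ∀ N, ∃ M ≥ N, ∃ n, ∀ K ≥ M, ∀ m, ∀ ε > 0, ∃ k, ∃ S > 0,
    ∀ z ∈ uD, 1 / a M m z ≤ max (ε / a N n z) (S / a K k z)

/-- Condition (wQ). -/
def CondwQ (a : ℕ → ℕ → ℂ → ℝ) : Prop :=
  ∀ N, ∃ M ≥ N, ∃ n, ∀ K ≥ M, ∀ m, ∃ k, ∃ S > 0,
    ∀ z ∈ uD, 1 / a M m z ≤ max (S / a N n z) (S / a K k z)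

/-- Condition (Q)~. -/
def CondQTilde (a : ℕ → ℕ → ℂ → ℝ) : Prop :=
  ∀ N, ∃ M ≥ N, ∃ n, ∀ K ≥ M, ∀ m, ∀ ε > 0, ∃ k, ∃ S > 0,
    ∀ z ∈ uD, growthTilde (fun x => 1 / a M m x) z ≤
      growthTilde (fun x => max (ε / a N n x) (S / a K k x)) z

/-- Pointwise maximum max_{N=1,…,L} a_{N,n(N)}. -/
def finMax (a : ℕ → ℕ → ℂ → ℝ) (nn : ℕ → ℕ) (L : ℕ) (z : ℂ) : ℝ :=
  sSup {t : ℝ | ∃ N, 1 ≤ N ∧ N ≤ L ∧ t = a N (nn N) z}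

/-- Condition (B). -/
def CondB (a : ℕ → ℕ → ℂ → ℝ) : Prop :=
  ∀ nn : ℕ → ℕ, ∃ m, ∀ M, ∃ L, 1 ≤ L ∧ ∃ c > 0,
    ∀ z ∈ uD, a M m z ≤ c * finMax a nn L z

/-- Condition (B)~. -/
def CondBTilde (a : ℕ → ℕ → ℂ → ℝ) : Prop :=
  ∀ nn : ℕ → ℕ, ∃ m, ∀ M, ∃ L, 1 ≤ L ∧ ∃ c > 0,
    ∀ z ∈ uD, assocWeight (a M m) z ≤ c * assocWeight (finMax a nn L) z

/-- A weight is essential. -/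
def Essential (v : ℂ → ℝ) : Prop :=
  ∃ C > 0, ∀ z ∈ uD,
    growthTilde (fun x => 1 / v x) z ≤ 1 / v z ∧
    1 / v z ≤ C * growthTilde (fun x => 1 / v x) z

/-- Condition (Σ). -/
def CondSigma (a : ℕ → ℕ → ℂ → ℝ) : Prop :=
  ∀ N, ∃ K ≥ N, ∀ k, ∃ n ≥ k, ∀ ε > 0, ∃ Q : Set ℂ,
    IsCompact Q ∧ Q ⊆ uD ∧ ∀ z ∈ uD \ Q, a N n z / a K k z ≤ ε

/-- The Banach space Ha(𝔻) as a set of functions. -/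
def HaSet (v : ℂ → ℝ) : Set (ℂ → ℂ) :=
  {f | Holo f ∧ ∃ C : ℝ, ∀ z ∈ uD, v z * ‖f z‖ ≤ C}

lemma rseq_succ (k : ℕ) : rseq (k + 1) = 1 - 1 / 2 ^ (2 ^ (k + 1)) := by
  simp [rseq]

lemma rseq_lt_one (k : ℕ) : rseq k < 1 := by
  unfold rseq
  split_ifs
  · norm_num
  · have : (0 : ℝ) < 1 / 2 ^ (2 ^ k) := by positivity
    linarith

lemma rseq_lt_succ (k : ℕ) : rseq k < rseq (k + 1) := by
  rw [rseq_succ]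
  unfold rseq
  split_ifs with h
  · subst h; norm_num
  · have : (1 : ℝ) / 2 ^ (2 ^ (k + 1)) < 1 / 2 ^ (2 ^ k) := by
      apply one_div_lt_one_div_of_lt (by positivity)
      apply pow_lt_pow_right₀ (by norm_num)
      exact Nat.pow_lt_pow_right (by norm_num) (by omega)
    linarith

lemma rseq_strictMono : StrictMono rseq := strictMono_nat_of_lt_succ rseq_lt_succ

lemma rseq_nonneg (k : ℕ) : 0 ≤ rseq k := by
  have h := rseq_strictMono.monotone (Nat.zero_le k)
  simpa [rseq] using h

lemma norm_rseq (k : ℕ) : ‖(rseq k : ℂ)‖ = rseq k := by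
  rw [Complex.norm_real, Real.norm_of_nonneg (rseq_nonneg k)]

lemma rseq_mem (k : ℕ) : (rseq k : ℂ) ∈ uD := by
  show ‖(rseq k : ℂ)‖ < 1
  rw [norm_rseq]; exact rseq_lt_one k

lemma rseq_tendsto : Filter.Tendsto rseq Filter.atTop (nhds 1) := by
  rw [← Filter.tendsto_add_atTop_iff_nat 1]
  have h1 : Filter.Tendsto (fun k : ℕ => 2 ^ (k + 1)) Filter.atTop Filter.atTop :=
    (tendsto_pow_atTop_atTop_of_one_lt (by norm_num : (1 : ℕ) < 2)).comp
      (Filter.tendsto_add_atTop_nat 1)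
  have h2 := (tendsto_pow_atTop_nhds_zero_of_lt_one (r := (1 / 2 : ℝ)) (by norm_num)
    (by norm_num)).comp h1
  have h3 := h2.const_sub 1
  simp only [sub_zero] at h3
  refine h3.congr fun k => ?_
  simp [rseq_succ]

/-- Dilation blocks of `f`. -/
def blk (f : ℂ → ℂ) : ℕ → ℂ → ℂ
  | 0, z => f (rseq 0 * z)
  | k + 1, z => f (rseq (k + 1) * z) - f (rseq k * z)

lemma sum_blk (f : ℂ → ℂ) (z : ℂ) (n : ℕ) :
    ∑ k ∈ Finset.range (n + 1), blk f k z = f (rseq n * z) := by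
  induction n with
  | zero => simp [blk]
  | succ n ih => rw [Finset.sum_range_succ, ih]; simp [blk]

lemma mul_mem_uD (k : ℕ) {z : ℂ} (hz : z ∈ uD) : (rseq k : ℂ) * z ∈ uD := by
  have hz' : ‖z‖ < 1 := hz
  show ‖(rseq k : ℂ) * z‖ < 1
  rw [norm_mul, norm_rseq]
  nlinarith [rseq_nonneg k, rseq_lt_one k, norm_nonneg z]

lemma mul_norm_le (k : ℕ) {z : ℂ} (hz : z ∈ uD) : ‖(rseq k : ℂ) * z‖ ≤ rseq k := by
  have hz' : ‖z‖ < 1 := hz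
  rw [norm_mul, norm_rseq]
  nlinarith [rseq_nonneg k, rseq_lt_one k, norm_nonneg z]

lemma dil_holo {f : ℂ → ℂ} (hf : Holo f) (k : ℕ) : Holo (fun z => f (rseq k * z)) := by
  refine DifferentiableOn.comp (g := f) (t := uD) hf (by fun_prop) ?_
  intro z hz
  exact mul_mem_uD k hz

lemma blk_holo {f : ℂ → ℂ} (hf : Holo f) (k : ℕ) : Holo (blk f k) := by
  cases k with
  | zero => exact dil_holo hf 0
  | succ k => exact DifferentiableOn.sub (dil_holo hf (k + 1)) (dil_holo hf k)

lemma blk_le {f : ℂ → ℂ} (k : ℕ) {M : ℝ}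
    (hM : ∀ z ∈ uD, ‖z‖ ≤ rseq k → ‖f z‖ ≤ M) {z : ℂ} (hz : z ∈ uD) :
    ‖blk f k z‖ ≤ 2 * M := by
  have h1 := hM _ (mul_mem_uD k hz) (mul_norm_le k hz)
  have h0 := (norm_nonneg _).trans h1
  cases k with
  | zero => simp only [blk]; linarith
  | succ k =>
    have h2 := hM _ (mul_mem_uD k hz) ((mul_norm_le k hz).trans (rseq_lt_succ k).le)
    simp only [blk]
    exact (norm_sub_le _ _).trans (by linarith)

lemma isOpen_uD : IsOpen uD := isOpen_lt continuous_norm continuous_const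

lemma blk_far {f : ℂ → ℂ} (hf : Holo f) (n m : ℕ) {M : ℝ}
    (hM : ∀ z ∈ uD, ‖z‖ ≤ rseq (n + m + 3) → ‖f z‖ ≤ M) {z : ℂ} (hz : ‖z‖ ≤ rseq (n + 1)) :
    ‖blk f (n + m + 3) z‖ ≤ 2 * M / 2 ^ (2 ^ m) := by
  have hzD : z ∈ uD := lt_of_le_of_lt hz (rseq_lt_one _)
  have hM0 : 0 ≤ M := (norm_nonneg _).trans (hM _ (mul_mem_uD _ hzD) (mul_norm_le _ hzD))
  set R : ℝ := rseq (n + m + 3) - rseq (n + 1) with hR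
  have hRpos : 0 < R := sub_pos.2 (rseq_strictMono (by omega))
  have hder : ∀ w ∈ Metric.closedBall (0 : ℂ) (rseq (n + 1)), ‖deriv f w‖ ≤ M / R := by
    intro w hw
    rw [mem_closedBall_zero_iff] at hw
    have hsub : ∀ x ∈ Metric.closedBall w R, ‖x‖ ≤ rseq (n + m + 3) := by
      intro x hx
      rw [mem_closedBall_iff_norm] at hx
      have := norm_add_le (x - w) w
      rw [sub_add_cancel] at this
      linarith
    apply Complex.norm_deriv_le_of_forall_mem_sphere_norm_le hRpos
    · apply DifferentiableOn.diffContOnCl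
      rw [closure_ball _ hRpos.ne']
      exact hf.mono fun x hx => lt_of_le_of_lt (hsub x hx) (rseq_lt_one _)
    · intro x hx
      have h := hsub x (Metric.sphere_subset_closedBall hx)
      exact hM x (lt_of_le_of_lt h (rseq_lt_one _)) h
  have hin : ∀ k, (rseq k : ℂ) * z ∈ Metric.closedBall (0 : ℂ) (rseq (n + 1)) := by
    intro k
    rw [mem_closedBall_zero_iff, norm_mul, norm_rseq]
    nlinarith [rseq_nonneg k, rseq_lt_one k, norm_nonneg z]
  have key := Convex.norm_image_sub_le_of_norm_deriv_le (𝕜 := ℂ) (f := f)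
    (s := Metric.closedBall (0 : ℂ) (rseq (n + 1))) (C := M / R)
    (fun w hw => hf.differentiableAt (isOpen_uD.mem_nhds
      (lt_of_le_of_lt (mem_closedBall_zero_iff.1 hw) (rseq_lt_one _)))) hder
    (convex_closedBall _ _) (hin (n + m + 2)) (hin (n + m + 3))
  have e1 : ‖(rseq (n + m + 3) : ℂ) * z - (rseq (n + m + 2) : ℂ) * z‖
      ≤ 1 / 2 ^ (2 ^ (n + m + 2)) := by
    rw [← sub_mul, norm_mul, ← Complex.ofReal_sub, Complex.norm_real,
      Real.norm_of_nonneg (sub_nonneg.2 (rseq_lt_succ (n + m + 2)).le)]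
    have h1 : rseq (n + m + 3) - rseq (n + m + 2) ≤ 1 / 2 ^ (2 ^ (n + m + 2)) := by
      have := rseq_lt_one (n + m + 3)
      have h2 := rseq_succ (n + m + 1)
      rw [show n + m + 1 + 1 = n + m + 2 by ring] at h2
      linarith
    have h0 := sub_nonneg.2 (rseq_lt_succ (n + m + 2)).le
    have hz1 : ‖z‖ < 1 := hzD
    calc _ ≤ (rseq (n + m + 3) - rseq (n + m + 2)) * 1 := by gcongr
      _ ≤ _ := by linarith
  have e2 : 1 / 2 ^ (2 ^ (n + 1)) / 2 ≤ R := by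
    have h2 := rseq_succ (n + m + 2)
    rw [show n + m + 2 + 1 = n + m + 3 by ring] at h2
    rw [hR, h2, rseq_succ]
    have : (1 : ℝ) / 2 ^ (2 ^ (n + m + 3)) ≤ 1 / 2 ^ (2 ^ (n + 1)) / 2 := by
      rw [div_div, ← pow_succ]
      apply one_div_le_one_div_of_le (by positivity)
      apply pow_le_pow_right₀ (by norm_num)
      apply Nat.succ_le_of_lt
      exact Nat.pow_lt_pow_right (by norm_num) (by omega)
    linarith
  have e3 : 2 ^ (n + 1) + 2 ^ m ≤ 2 ^ (n + m + 2) := by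
    have h1 : 2 ^ (n + 1) ≤ 2 ^ (n + m + 1) := Nat.pow_le_pow_right (by norm_num) (by omega)
    have h2 : 2 ^ m ≤ 2 ^ (n + m + 1) := Nat.pow_le_pow_right (by norm_num) (by omega)
    have h3 : 2 ^ (n + m + 2) = 2 ^ (n + m + 1) * 2 := pow_succ _ _
    omega
  have e4 : (2 : ℝ) ^ (2 ^ (n + 1)) * 2 ^ (2 ^ m) ≤ 2 ^ (2 ^ (n + m + 2)) := by
    rw [← pow_add]
    exact pow_le_pow_right₀ (by norm_num) e3
  have : ‖blk f (n + m + 3) z‖ ≤ M / (1 / 2 ^ (2 ^ (n + 1)) / 2) * (1 / 2 ^ (2 ^ (n + m + 2))) := by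
    refine key.trans ?_
    gcongr
  refine this.trans ?_
  rw [div_mul_eq_mul_div, div_div, div_le_div_iff₀ (by positivity) (by positivity)]
  have hp1 : (0 : ℝ) < 2 ^ (2 ^ (n + 1)) := by positivity
  have hp2 : (0 : ℝ) < 2 ^ (2 ^ (n + m + 2)) := by positivity
  generalize (2 : ℝ) ^ (2 ^ (n + 1)) = x at *
  generalize (2 : ℝ) ^ (2 ^ (n + m + 2)) = y at *
  generalize (2 : ℝ) ^ (2 ^ m) = w at *
  have : w / y ≤ 1 / x := by
    rw [div_le_div_iff₀ hp2 hp1]; linarith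
  calc M * (1 / y) * w = M * (w / y) := by ring
    _ ≤ M * (1 / x) := by gcongr
    _ = _ := by field_simp

/-- The tail coefficients. -/
def Dco (A : ℝ) (j : ℕ) : ℝ := 4 * A ^ (j + 1) / 2 ^ (2 ^ (j - 2))

lemma Dco_summable {A : ℝ} (hA : 1 < A) : Summable (Dco A) := by
  rw [← summable_nat_add_iff 2]
  have hA0 : 0 < A := by linarith
  have hp : ∀ m, 0 < Dco A m := fun m => by unfold Dco; positivity
  apply summable_of_ratio_test_tendsto_lt_one (l := 0) (by norm_num)
  · exact Filter.Eventually.of_forall fun m => (hp _).ne'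
  · have h1 : Filter.Tendsto (fun k : ℕ => 2 ^ k) Filter.atTop Filter.atTop :=
      (tendsto_pow_atTop_atTop_of_one_lt (by norm_num : (1 : ℕ) < 2))
    have h2 := ((tendsto_pow_atTop_nhds_zero_of_lt_one (r := (1 / 2 : ℝ)) (by norm_num)
      (by norm_num)).comp h1).const_mul A
    rw [mul_zero] at h2
    refine h2.congr fun m => ?_
    rw [Real.norm_of_nonneg (hp _).le, Real.norm_of_nonneg (hp _).le]
    simp only [Dco, Function.comp, Nat.add_sub_cancel, show m + 1 + 2 - 2 = m + 1 by omega]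
    rw [show (2 : ℕ) ^ (m + 1) = 2 ^ m + 2 ^ m by ring, pow_add (2 : ℝ), one_div, inv_pow]
    field_simp
    ring

/-- The full majorant. -/
def Bco (a A : ℝ) (n k : ℕ) : ℝ := if k ≤ n then 2 * a ^ (n - k) else Dco A (k - (n + 1))

lemma Bco_shift (a A : ℝ) (n : ℕ) : (fun j => Bco a A n (j + (n + 1))) = Dco A := by
  funext j
  simp [Bco, show ¬ (j + (n + 1) ≤ n) by omega]

lemma Bco_summable {a A : ℝ} (hA : 1 < A) (n : ℕ) : Summable (Bco a A n) := by
  rw [← summable_nat_add_iff (n + 1), Bco_shift]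
  exact Dco_summable hA

lemma Bco_tsum {a A : ℝ} (ha0 : 0 < a) (ha1 : a < 1) (hA : 1 < A) (n : ℕ) :
    ∑' k, Bco a A n k ≤ 2 / (1 - a) + ∑' j, Dco A j := by
  rw [← (Bco_summable (a := a) hA n).sum_add_tsum_nat_add (n + 1), Bco_shift]
  have h1 : ∑ k ∈ Finset.range (n + 1), Bco a A n k
      = ∑ k ∈ Finset.range (n + 1), 2 * a ^ k := by
    rw [← Finset.sum_range_reflect (fun k => 2 * a ^ k)]
    refine Finset.sum_congr rfl fun k hk => ?_
    have : k ≤ n := by have := Finset.mem_range.1 hk; omega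
    simp [Bco, this]
  have h2 : ∑ k ∈ Finset.range (n + 1), a ^ k ≤ (1 - a)⁻¹ := by
    rw [← tsum_geometric_of_lt_one ha0.le ha1]
    exact (summable_geometric_of_lt_one ha0.le ha1).sum_le_tsum _ fun i _ => by positivity
  rw [h1, ← Finset.mul_sum, div_eq_mul_inv]
  linarith

lemma log1_iter {A : ℝ} (hA : 1 < A) {u : ℂ → ℝ} (h : Log1 A u) (n j : ℕ) :
    u (rseq n) ≤ A ^ j * u (rseq (n + j)) := by
  induction j with
  | zero => simp
  | succ j ih =>
    have := h (n + j)
    calc _ ≤ _ := ih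
      _ ≤ A ^ j * (A * u (rseq (n + j + 1))) := by gcongr
      _ = _ := by rw [← add_assoc]; ring

lemma log2_iter {a : ℝ} (ha : 0 < a) {u : ℂ → ℝ} (h : Log2 a u) (n j : ℕ) :
    u (rseq (n + j)) ≤ a ^ j * u (rseq n) := by
  induction j with
  | zero => simp
  | succ j ih =>
    have := h (n + j)
    calc _ ≤ a * u (rseq (n + j)) := this
      _ ≤ a * (a ^ j * u (rseq n)) := by gcongr
      _ = _ := by ring

lemma blk_major {a A : ℝ} (ha0 : 0 < a) (hA : 1 < A) {u : ℂ → ℝ}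
    (hu : IsWeight u) (h1 : Log1 A u) (h2 : Log2 a u) {c : ℝ} (hc : 0 < c)
    {f : ℂ → ℂ} (hf : Holo f) (k n : ℕ)
    (hM : ∀ z ∈ uD, ‖z‖ ≤ rseq k → ‖f z‖ ≤ c / u (rseq k)) {z : ℂ} (hz : ‖z‖ ≤ rseq (n + 1)) :
    ‖blk f k z‖ ≤ c / u (rseq n) * Bco a A n k := by
  have hzD : z ∈ uD := lt_of_le_of_lt hz (rseq_lt_one _)
  have hn := hu.2 _ (rseq_mem n)
  have hk := hu.2 _ (rseq_mem k)
  have hA0 : 0 < A := by linarith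
  unfold Bco
  split_ifs with hkn
  · obtain ⟨i, rfl⟩ := Nat.exists_eq_add_of_le hkn
    refine (blk_le k hM hzD).trans ?_
    rw [Nat.add_sub_cancel_left]
    have := log2_iter ha0 h2 k i
    have h3 : c / u (rseq k) ≤ c / u (rseq (k + i)) * a ^ i := by
      rw [div_mul_eq_mul_div, div_le_div_iff₀ hk hn, mul_assoc]
      exact mul_le_mul_of_nonneg_left this hc.le
    linarith
  · obtain ⟨j, rfl⟩ : ∃ j, k = n + (j + 1) := ⟨k - (n + 1), by omega⟩
    have h3 : c / u (rseq (n + (j + 1))) ≤ c / u (rseq n) * A ^ (j + 1) := by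
      have := log1_iter hA h1 n (j + 1)
      rw [div_mul_eq_mul_div, div_le_div_iff₀ hk hn, mul_assoc]
      exact mul_le_mul_of_nonneg_left this hc.le
    rw [show n + (j + 1) - (n + 1) = j by omega]
    unfold Dco
    have hpos : 0 < c / u (rseq n) := by positivity
    by_cases hj : j < 2
    · refine (blk_le _ hM hzD).trans ?_
      rw [show j - 2 = 0 by omega]
      norm_num
      linarith
    · obtain ⟨m, rfl⟩ : ∃ m, j = m + 2 := ⟨j - 2, by omega⟩
      have e : n + (m + 2 + 1) = n + m + 3 := by omega
      rw [e] at hM h3 ⊢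
      refine (blk_far hf n m hM hz).trans ?_
      rw [Nat.add_sub_cancel, show c / u (rseq n) * (4 * A ^ (m + 2 + 1) / 2 ^ (2 ^ m))
        = 4 * (c / u (rseq n) * A ^ (m + 2 + 1)) / 2 ^ (2 ^ m) by ring]
      refine div_le_div_of_nonneg_right ?_ (by positivity)
      have : 0 ≤ c / u (rseq n) * A ^ (m + 2 + 1) := by positivity
      linarith

lemma exists_shell {z : ℂ} (hz : z ∈ uD) : ∃ n, rseq n ≤ ‖z‖ ∧ ‖z‖ < rseq (n + 1) := by
  have hz1 : ‖z‖ < 1 := hz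
  have hex : ∃ n, ‖z‖ < rseq n := ((rseq_tendsto.eventually (lt_mem_nhds hz1))).exists
  classical
  have hs := Nat.find_spec hex
  have hne : Nat.find hex ≠ 0 := by
    intro h0
    rw [h0] at hs
    have := norm_nonneg z
    simp [rseq] at hs
    linarith
  obtain ⟨n, hn⟩ := Nat.exists_eq_succ_of_ne_zero hne
  refine ⟨n, ?_, ?_⟩
  · exact not_lt.1 (Nat.find_min hex (by omega))
  · rw [hn] at hs; exact hs

open Classical in
lemma side {a A : ℝ} (ha0 : 0 < a) (ha1 : a < 1) (hA : 1 < A) {u : ℂ → ℝ}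
    (hu : IsWeight u) (hni : NonInc u) (h1 : Log1 A u) (h2 : Log2 a u) {c : ℝ} (hc : 0 < c)
    {f : ℂ → ℂ} (hf : Holo f) (S : Set ℕ)
    (hM : ∀ k ∈ S, ∀ z ∈ uD, ‖z‖ ≤ rseq k → ‖f z‖ ≤ c / u (rseq k)) :
    Holo (fun z => ∑' k, if k ∈ S then blk f k z else 0) ∧
    (∀ z ∈ uD, Summable (fun k => if k ∈ S then blk f k z else 0)) ∧
    (∀ z ∈ uD, u z * ‖∑' k, if k ∈ S then blk f k z else 0‖
      ≤ (2 / (1 - a) + ∑' j, Dco A j) * c) := by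
  have hB0 : ∀ n k, 0 ≤ Bco a A n k := by
    intro n k
    have : 0 < A := by linarith
    unfold Bco Dco
    split_ifs <;> positivity
  have hmaj : ∀ n k, ∀ z : ℂ, ‖z‖ ≤ rseq (n + 1) →
      ‖if k ∈ S then blk f k z else 0‖ ≤ c / u (rseq n) * Bco a A n k := by
    intro n k z hz
    have hn := hu.2 _ (rseq_mem n)
    split_ifs with hk
    · exact blk_major ha0 hA hu h1 h2 hc hf k n (hM k hk) hz
    · rw [norm_zero]; exact mul_nonneg (by positivity) (hB0 n k)
  have hsum : ∀ n, Summable (fun k => c / u (rseq n) * Bco a A n k) :=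
    fun n => (Bco_summable hA n).mul_left _
  refine ⟨?_, ?_, ?_⟩
  · intro z hz
    obtain ⟨n, -, hn⟩ := exists_shell hz
    have hd : DifferentiableOn ℂ (fun z => ∑' k, if k ∈ S then blk f k z else 0)
        (Metric.ball (0 : ℂ) (rseq (n + 1))) := by
      apply differentiableOn_tsum_of_summable_norm (hsum n) _ Metric.isOpen_ball
      · intro k w hw
        exact hmaj n k w (mem_ball_zero_iff.1 hw).le
      · intro k
        split_ifs
        · exact (blk_holo hf k).mono fun w hw => (mem_ball_zero_iff.1 hw).trans (rseq_lt_one _)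
        · exact differentiableOn_const _
    exact (hd.differentiableAt (Metric.isOpen_ball.mem_nhds
      (mem_ball_zero_iff.2 hn))).differentiableWithinAt
  · intro z hz
    obtain ⟨n, -, hn⟩ := exists_shell hz
    exact Summable.of_norm_bounded (hsum n) fun k => hmaj n k z hn.le
  · intro z hz
    obtain ⟨n, hn0, hn⟩ := exists_shell hz
    have hb := tsum_of_norm_bounded (hsum n).hasSum fun k => hmaj n k z hn.le
    rw [tsum_mul_left] at hb
    have hT := Bco_tsum ha0 ha1 hA n
    have hpn := hu.2 _ (rseq_mem n)
    have hpz := hu.2 _ hz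
    have hle : u z ≤ u (rseq n) := hni _ (rseq_mem n) _ hz (by rw [norm_rseq]; exact hn0)
    have hT0 : 0 ≤ ∑' k, Bco a A n k := tsum_nonneg (hB0 n)
    calc _ ≤ u (rseq n) * (c / u (rseq n) * ∑' k, Bco a A n k) := by gcongr
      _ = (∑' k, Bco a A n k) * c := by field_simp
      _ ≤ _ := by gcongr

/-- decomposition theorem with a constant T depending only on a and A. -/
theorem decomposition_constant (a' A : ℝ) (ha0 : 0 < a') (ha1 : a' < 1) (hA : 1 < A) :
    ∃ T > 0, ∀ u₀ u₁ : ℂ → ℝ,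
      IsWeight u₀ → Radial u₀ → NonInc u₀ → Log1 A u₀ → Log2 a' u₀ →
      IsWeight u₁ → Radial u₁ → NonInc u₁ → Log1 A u₁ → Log2 a' u₁ →
      ∀ c₀ c₁ : ℝ, 0 < c₀ → 0 < c₁ →
      ∀ f : ℂ → ℂ, Holo f →
        (∀ z ∈ uD, ‖f z‖ ≤ max (c₀ / u₀ z) (c₁ / u₁ z)) →
        ∃ h₀ h₁ : ℂ → ℂ, Holo h₀ ∧ Holo h₁ ∧ (∀ z ∈ uD, f z = h₀ z + h₁ z) ∧
          (∀ z ∈ uD, u₀ z * ‖h₀ z‖ ≤ T * c₀) ∧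
          (∀ z ∈ uD, u₁ z * ‖h₁ z‖ ≤ T * c₁) := by
  have hA0 : 0 < A := by linarith
  have hD0 : 0 ≤ ∑' j, Dco A j := tsum_nonneg fun j => by unfold Dco; positivity
  have h1a : 0 < 1 - a' := by linarith
  refine ⟨2 / (1 - a') + ∑' j, Dco A j, by positivity, ?_⟩
  intro u₀ u₁ hw₀ _ hn₀ hl₀ hm₀ hw₁ _ hn₁ hl₁ hm₁ c₀ c₁ hc₀ hc₁ f hf hb
  classical
  set S : Set ℕ := {k | c₁ / u₁ (rseq k) ≤ c₀ / u₀ (rseq k)} with hS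
  have hmono : ∀ (u : ℂ → ℝ), IsWeight u → NonInc u → ∀ c : ℝ, 0 < c → ∀ k, ∀ z ∈ uD,
      ‖z‖ ≤ rseq k → c / u z ≤ c / u (rseq k) := by
    intro u hu hni c hc k z hz hzk
    have hp := hu.2 _ (rseq_mem k)
    have := hni z hz _ (rseq_mem k) (by rw [norm_rseq]; exact hzk)
    gcongr
  obtain ⟨A0, B0, C0⟩ := side ha0 ha1 hA hw₀ hn₀ hl₀ hm₀ hc₀ hf S (by
    intro k hk z hz hzk
    have hk' : c₁ / u₁ (rseq k) ≤ c₀ / u₀ (rseq k) := hk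
    refine (hb z hz).trans (max_le ?_ ?_)
    · exact hmono u₀ hw₀ hn₀ c₀ hc₀ k z hz hzk
    · exact (hmono u₁ hw₁ hn₁ c₁ hc₁ k z hz hzk).trans hk')
  obtain ⟨A1, B1, C1⟩ := side ha0 ha1 hA hw₁ hn₁ hl₁ hm₁ hc₁ hf Sᶜ (by
    intro k hk z hz hzk
    have hk' : c₀ / u₀ (rseq k) ≤ c₁ / u₁ (rseq k) := by
      rw [hS, Set.mem_compl_iff, Set.mem_ofPred_eq, not_le] at hk
      exact hk.le
    refine (hb z hz).trans (max_le ?_ ?_)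
    · exact (hmono u₀ hw₀ hn₀ c₀ hc₀ k z hz hzk).trans hk'
    · exact hmono u₁ hw₁ hn₁ c₁ hc₁ k z hz hzk)
  refine ⟨_, _, A0, A1, ?_, C0, C1⟩
  intro z hz
  have hs := (B0 z hz).hasSum.add (B1 z hz).hasSum
  have gen : ∀ s : ℂ, ∀ F : ℕ → ℂ, (∀ k, F k = blk f k z) → HasSum F s →
      HasSum (fun k => blk f k z) s := by
    intro s F hF h
    rwa [funext hF] at h
  replace hs := gen _ _ (fun k => by by_cases h : k ∈ S <;> simp [h]) hs
  have ht := (Filter.tendsto_add_atTop_iff_nat 1).2 hs.tendsto_sum_nat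
  simp only [sum_blk] at ht
  have ht2 : Filter.Tendsto (fun n => f (rseq n * z)) Filter.atTop (nhds (f z)) := by
    have hcont : ContinuousAt f z := (hf.differentiableAt (isOpen_uD.mem_nhds hz)).continuousAt
    have hr : Filter.Tendsto (fun n => (rseq n : ℂ) * z) Filter.atTop (nhds z) := by
      have := ((Complex.continuous_ofReal.tendsto 1).comp rseq_tendsto).mul_const z
      simpa using this
    exact hcont.tendsto.comp hr
  exact tendsto_nhds_unique ht2 ht
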